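/- There exists δ > 0 such that for all real u, v, w with |u|, |v|, |w| < δ and all real z with 0 ≤ z < 1, ∑_{k ≥ n+s, n ≥ s ≥ 1} G_0^*(k,n,s;z) u^{k−n−s} v^{n−s} w^{s−1} = (z/(1−u−v+uv−w)) · ₃F₂((1−u)/2, 1/2, 1; α*, β*; z²), where α* and β* are the two (possibly complex) roots of X² − (3 − u/2 − v/2)X + (9 − 3u − 3v + uv − w)/4 = 0, and the series converges absolutely. -/

import Mathlib

open scoped BigOperators

/-- The multiple `t`-value of an index `K = (k₁, …, kₙ)` (a list of positive integers):
`t(K) = ∑_{m₁ > ⋯ > mₙ > 0, all mᵢ odd} 1 / (m₁^{k₁} ⋯ mₙ^{kₙ})`. -/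
noncomputable def multT (K : List ℕ) : ℝ :=
  ∑' m : Fin K.length → ℕ,
    if (∀ i, Odd (m i)) ∧ (∀ i j : Fin K.length, i < j → m j < m i) then
      ∏ i, ((m i : ℝ) ^ K.get i)⁻¹
    else 0

/-- The multiple `t`-star value of an index `K = (k₁, …, kₙ)`:
`t*(K) = ∑_{m₁ ≥ ⋯ ≥ mₙ > 0, all mᵢ odd} 1 / (m₁^{k₁} ⋯ mₙ^{kₙ})`. -/
noncomputable def multTStar (K : List ℕ) : ℝ :=
  ∑' m : Fin K.length → ℕ,
    if (∀ i, Odd (m i)) ∧ (∀ i j : Fin K.length, i < j → m j ≤ m i) then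
      ∏ i, ((m i : ℝ) ^ K.get i)⁻¹
    else 0

/-- An index (list of positive integers) is admissible if its first entry is `> 1`. -/
def Admissible (K : List ℕ) : Prop := (∀ i ∈ K, 1 ≤ i) ∧ 2 ≤ K.headI

instance : DecidablePred Admissible := fun K =>
  inferInstanceAs (Decidable ((∀ i ∈ K, 1 ≤ i) ∧ 2 ≤ K.headI))

/-- `G0h k n s` is the sum of multiple `t`-values over all admissible indices of
weight `k`, depth `n` and height `s`. -/
noncomputable def G0h (k n s : ℕ) : ℝ :=
  ∑' K : List ℕ,
    if Admissible K ∧ K.sum = k ∧ K.length = n ∧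
        K.countP (fun i => decide (2 ≤ i)) = s then
      multT K
    else 0

/-- `G0hStar k n s` is the sum of multiple `t`-star values over all admissible indices of
weight `k`, depth `n` and height `s`. -/
noncomputable def G0hStar (k n s : ℕ) : ℝ :=
  ∑' K : List ℕ,
    if Admissible K ∧ K.sum = k ∧ K.length = n ∧
        K.countP (fun i => decide (2 ≤ i)) = s then
      multTStar K
    else 0

/-- `G0d k n` is the sum of multiple `t`-values over all admissible indices of
weight `k` and depth `n`. -/
noncomputable def G0d (k n : ℕ) : ℝ :=
  ∑' K : List ℕ,
    if Admissible K ∧ K.sum = k ∧ K.length = n then multT K else 0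

/-- `G0dStar k n` is the sum of multiple `t`-star values over all admissible indices of
weight `k` and depth `n`. -/
noncomputable def G0dStar (k n : ℕ) : ℝ :=
  ∑' K : List ℕ,
    if Admissible K ∧ K.sum = k ∧ K.length = n then multTStar K else 0

/-- The single `t`-value `t(n) = ∑_{m odd, m > 0} 1 / m^n`. -/
noncomputable def tval (n : ℕ) : ℝ := ∑' m : ℕ, 1 / (2 * (m : ℝ) + 1) ^ n

/-- The ascending Pochhammer symbol `(a)ₙ = a (a+1) ⋯ (a+n-1)`. -/
noncomputable def poch (a : ℂ) (n : ℕ) : ℂ := ∏ i ∈ Finset.range n, (a + i)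

/-- The generalized hypergeometric function `₃F₂(a, b, c; d, e; z)`. -/
noncomputable def hyp3F2 (a b c d e z : ℂ) : ℂ :=
  ∑' n : ℕ, poch a n * poch b n * poch c n /
      ((n.factorial : ℂ) * poch d n * poch e n) * z ^ n

/-- The generalized hypergeometric function with upper parameters `as` and lower
parameters `bs`. -/
noncomputable def hypF (as bs : List ℂ) (z : ℂ) : ℂ :=
  ∑' n : ℕ, (as.map fun a => poch a n).prod /
      ((n.factorial : ℂ) * (bs.map fun b => poch b n).prod) * z ^ n

/-- The one-variable multiple polylogarithm
`L_K(z) = ∑_{m₁ > ⋯ > mₙ > 0, all mᵢ odd} z^{m₁} / (m₁^{k₁} ⋯ mₙ^{kₙ})`. -/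
noncomputable def Lt (K : List ℕ) (z : ℝ) : ℝ :=
  ∑' m : Fin K.length → ℕ,
    if h : (∀ i, Odd (m i)) ∧ (∀ i j : Fin K.length, i < j → m j < m i) ∧
        0 < K.length then
      z ^ (m ⟨0, h.2.2⟩) * ∏ i, ((m i : ℝ) ^ K.get i)⁻¹
    else 0

/-- The one-variable star multiple polylogarithm
`L*_K(z) = ∑_{m₁ ≥ ⋯ ≥ mₙ > 0, all mᵢ odd} z^{m₁} / (m₁^{k₁} ⋯ mₙ^{kₙ})`. -/
noncomputable def LtStar (K : List ℕ) (z : ℝ) : ℝ :=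
  ∑' m : Fin K.length → ℕ,
    if h : (∀ i, Odd (m i)) ∧ (∀ i j : Fin K.length, i < j → m j ≤ m i) ∧
        0 < K.length then
      z ^ (m ⟨0, h.2.2⟩) * ∏ i, ((m i : ℝ) ^ K.get i)⁻¹
    else 0

/-- `G0hz k n s z` is the sum of `L_K(z)` over all admissible indices `K` of
weight `k`, depth `n` and height `s`. -/
noncomputable def G0hz (k n s : ℕ) (z : ℝ) : ℝ :=
  ∑' K : List ℕ,
    if Admissible K ∧ K.sum = k ∧ K.length = n ∧
        K.countP (fun i => decide (2 ≤ i)) = s then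
      Lt K z
    else 0

/-- `G0hzStar k n s z` is the sum of `L*_K(z)` over all admissible indices `K` of
weight `k`, depth `n` and height `s`. -/
noncomputable def G0hzStar (k n s : ℕ) (z : ℝ) : ℝ :=
  ∑' K : List ℕ,
    if Admissible K ∧ K.sum = k ∧ K.length = n ∧
        K.countP (fun i => decide (2 ≤ i)) = s then
      LtStar K z
    else 0

/-!
Let `x` run over the odd numbers. Summing the monomials in `u, v, w` over all values of one entry of
the index gives geometric series in `x⁻¹`: the first entry contributes `1 / (x (x - u))` and every
later entry contributes `ℓ(x) = v / x + w / (x (x - u))`. For a fixed largest variable `x`, summing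
over all later entries, of any number, is the generating function of the complete homogeneous
symmetric polynomials and equals `∏ (1 - ℓ(y))⁻¹` over the odd `y ≤ x`. As
`1 - ℓ(y) = ((y - u) (y - v) - w) / (y (y - u))`, and `(y - u) (y - v) - w = 4 (α + j) (β + j)` for
`y = 2j + 3`, these products are quotients of Pochhammer symbols, and the remaining sum over `x` is
the hypergeometric series. The same computation with `‖u‖, ‖v‖, ‖w‖` gives absolute convergence,
which justifies all interchanges of summation.
-/

section Series

open Finset Filter Topology

variable {ι β : Type*}

lemma hasSum_mul_of_summable_norm {R : Type*} [NormedRing R] [CompleteSpace R]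
    {f : ι → R} {g : β → R} {a b : R} (hf : Summable fun i => ‖f i‖) (hfa : HasSum f a)
    (hg : Summable fun i => ‖g i‖) (hgb : HasSum g b) :
    HasSum (fun p : ι × β => f p.1 * g p.2) (a * b) :=
  hfa.mul hgb (summable_mul_of_summable_norm hf hg)

lemma hasSum_prod_of_norm_bounded {E : Type*} [NormedAddCommGroup E] [CompleteSpace E]
    {f : ι × β → E} {g : ι → E} {F : ι × β → ℝ} {G : ι → ℝ} (hF : ∀ p, ‖f p‖ ≤ F p)
    (hFG : ∀ x, HasSum (fun y => F (x, y)) (G x)) (hG : Summable G)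
    (hg : ∀ x, HasSum (fun y => f (x, y)) (g x)) : HasSum f (∑' x, g x) := by
  have hsummableF : Summable F := by
    rw [summable_prod_of_nonneg fun p => (norm_nonneg _).trans (hF p)]
    exact ⟨fun x => (hFG x).summable, by simpa only [(hFG _).tsum_eq] using hG⟩
  have hf := (hsummableF.of_norm_bounded hF).hasSum
  rwa [← (hf.prod_fiberwise hg).tsum_eq] at hf

lemma summable_pow_mul_prod_range_succ {𝕜 : Type*} [NormedField 𝕜] [CompleteSpace 𝕜]
    {x : 𝕜} (hx : ‖x‖ < 1) {g : ℕ → 𝕜} (hg : Tendsto g atTop (𝓝 1)) :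
    Summable fun N => x ^ N * ∏ j ∈ range (N + 1), g j := by
  obtain ⟨r, hxr, hr⟩ := exists_between hx
  have hratio : Tendsto (fun N => ‖x * g (N + 1)‖) atTop (𝓝 ‖x‖) := by
    simpa using ((hg.comp (tendsto_add_atTop_nat 1)).const_mul x).norm
  refine summable_of_ratio_norm_eventually_le hr ?_
  filter_upwards [hratio.eventually_le_const hxr] with N hN
  calc ‖x ^ (N + 1) * ∏ j ∈ range (N + 1 + 1), g j‖
      = ‖x * g (N + 1)‖ * ‖x ^ N * ∏ j ∈ range (N + 1), g j‖ := by
        rw [← norm_mul, prod_range_succ _ (N + 1)]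
        congr 1
        ring
    _ ≤ r * ‖x ^ N * ∏ j ∈ range (N + 1), g j‖ := by gcongr

lemma injective_uncurry_cons : Function.Injective fun p : ι × List ι => p.1 :: p.2 :=
  fun p q h => by simpa [Prod.ext_iff] using h

lemma hasSum_list_of_hasSum_cons {M : Type*} [AddCommMonoid M] [TopologicalSpace M]
    [ContinuousAdd M] {f : List ι → M} {b : M}
    (h : HasSum (fun p : ι × List ι => f (p.1 :: p.2)) b) : HasSum f (f [] + b) := by
  refine (hasSum_unique (f ∘ ((↑) : ({[]} : Set (List ι)) → List ι))).add_isCompl ?_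
    (injective_uncurry_cons.hasSum_range_iff.2 h)
  constructor
  · simp
  · rw [codisjoint_iff]
    ext K
    cases K <;> simp

end Series

section Tuples

open Finset

lemma antitone_cons_iff {α : Type*} [Preorder α] {n : ℕ} {a : α} {f : Fin n → α} :
    Antitone (Fin.cons a f : Fin (n + 1) → α) ↔ (∀ i, f i ≤ a) ∧ Antitone f := by
  refine ⟨fun h => ⟨fun i => h (Fin.zero_le i.succ), fun i j hij => h (Fin.succ_le_succ_iff.2 hij)⟩,
    fun ⟨hle, hf⟩ i j hij => ?_⟩
  cases j using Fin.cases with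
  | zero => rw [Fin.le_zero_iff.1 hij]
  | succ j =>
    cases i using Fin.cases with
    | zero => exact hle j
    | succ i => exact hf (Fin.succ_le_succ_iff.1 hij)

/-- The weakly decreasing tuples `N ≥ j₁ ≥ ⋯ ≥ jₙ` of natural numbers. -/
def antitoneTuples (n N : ℕ) : Finset (Fin n → ℕ) :=
  {j ∈ Fintype.piFinset fun _ => range (N + 1) | Antitone j}

lemma mem_antitoneTuples {n N : ℕ} {j : Fin n → ℕ} :
    j ∈ antitoneTuples n N ↔ (∀ i, j i ≤ N) ∧ Antitone j := by
  simp [antitoneTuples]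

lemma card_antitoneTuples_le (n N : ℕ) : #(antitoneTuples n N) ≤ (N + 1) ^ n :=
  (card_filter_le _ _).trans_eq (by simp)

lemma sum_antitoneTuples_succ {M : Type*} [AddCommMonoid M] {n N : ℕ} (f : (Fin (n + 1) → ℕ) → M) :
    ∑ j ∈ antitoneTuples (n + 1) N, f j =
      ∑ i ∈ range (N + 1), ∑ j ∈ antitoneTuples n i, f (Fin.cons i j) := by
  rw [sum_sigma']
  refine sum_nbij' (fun j => ⟨j 0, Fin.tail j⟩) (fun p => Fin.cons p.1 p.2) (fun j hj => ?_)
    (fun p hp => ?_) (by simp) (by simp) (by simp)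
  · rw [mem_antitoneTuples] at hj
    rw [mem_sigma, mem_range_succ_iff, mem_antitoneTuples, ← antitone_cons_iff, Fin.cons_self_tail]
    exact ⟨hj.1 0, hj.2⟩
  · rw [mem_sigma, mem_range_succ_iff, mem_antitoneTuples, ← antitone_cons_iff] at hp
    exact mem_antitoneTuples.2 ⟨fun i => (hp.2 (Fin.zero_le i)).trans hp.1, hp.2⟩

end Tuples

section StarSum

open Finset

variable {ι R : Type*}

section CommSemiring

variable [CommSemiring R]

/-- The truncated star sum `∑ a k₁ j₁ ⋯ a kₙ jₙ` over `N ≥ j₁ ≥ ⋯ ≥ jₙ ≥ 0` attached to the word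
`K = [k₁, …, kₙ]`. -/
def starSum (a : ι → ℕ → R) (K : List ι) (N : ℕ) : R :=
  ∑ j ∈ antitoneTuples K.length N, ∏ i, a (K.get i) (j i)

lemma starSum_nil (a : ι → ℕ → R) (N : ℕ) : starSum a [] N = 1 := by
  have h : antitoneTuples 0 N = {![]} := by
    ext j
    simp [mem_antitoneTuples, Subsingleton.antitone, Subsingleton.elim j ![]]
  exact (congrArg (fun s : Finset (Fin 0 → ℕ) => ∑ _j ∈ s, (1 : R)) h).trans (sum_singleton _ _)

lemma starSum_cons (a : ι → ℕ → R) (k : ι) (K : List ι) (N : ℕ) :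
    starSum a (k :: K) N = ∑ j ∈ range (N + 1), a k j * starSum a K j := by
  refine (sum_antitoneTuples_succ _).trans (sum_congr rfl fun i _ => ?_)
  rw [starSum, mul_sum]
  exact sum_congr rfl fun j _ => Fin.prod_univ_succ _

lemma starSum_mul_left (c : ι → R) (a : ι → ℕ → R) (K : List ι) (N : ℕ) :
    starSum (fun k j => c k * a k j) K N = (K.map c).prod * starSum a K N := by
  simp only [starSum, prod_mul_distrib, mul_sum, List.get_eq_getElem, Fin.prod_univ_fun_getElem]

end CommSemiring

lemma starSum_nonneg {a : ι → ℕ → ℝ} (ha : ∀ k j, 0 ≤ a k j) (K : List ι) (N : ℕ) :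
    0 ≤ starSum a K N :=
  sum_nonneg fun _ _ => prod_nonneg fun _ _ => ha _ _

lemma norm_starSum_le [NormedField R] (a : ι → ℕ → R) (K : List ι) (N : ℕ) :
    ‖starSum a K N‖ ≤ starSum (fun k j => ‖a k j‖) K N :=
  (norm_sum_le _ _).trans_eq (sum_congr rfl fun _ _ => norm_prod _ _)

lemma norm_starSum_le_pow [NormedField R] {a : ι → ℕ → R} (ha : ∀ k j, ‖a k j‖ ≤ 1) (K : List ι)
    (N : ℕ) : ‖starSum a K N‖ ≤ ((N + 1 : ℕ) : ℝ) ^ K.length :=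
  calc ‖starSum a K N‖ ≤ ∑ _j ∈ antitoneTuples K.length N, (1 : ℝ) :=
        (norm_starSum_le a K N).trans <| sum_le_sum fun _ _ =>
          prod_le_one (fun _ _ => norm_nonneg _) fun _ _ => ha _ _
    _ ≤ ((N + 1 : ℕ) : ℝ) ^ K.length := by
        simpa using mod_cast card_antitoneTuples_le K.length N

end StarSum

section WordSeries

open Finset

variable {ι 𝕜 : Type*}

lemma one_add_sum_mul_prod_one_sub_inv [Field 𝕜] {f : ℕ → 𝕜} (hf : ∀ j, f j ≠ 1) (N : ℕ) :
    1 + ∑ j ∈ range (N + 1), f j * ∏ i ∈ range (j + 1), (1 - f i)⁻¹ =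
      ∏ j ∈ range (N + 1), (1 - f j)⁻¹ := by
  have hsub (j : ℕ) : 1 - f j ≠ 0 := sub_ne_zero.2 (hf j).symm
  induction N with
  | zero =>
    have := hsub 0
    simp only [zero_add, sum_range_one, prod_range_one]
    field_simp
    ring
  | succ N ih =>
    have := hsub (N + 1)
    rw [sum_range_succ, ← add_assoc, ih, prod_range_succ _ (N + 1)]
    field_simp
    ring

lemma eq_prod_one_sub_inv_of_eq_one_add_sum [Field 𝕜] {f G : ℕ → 𝕜} (hf : ∀ j, f j ≠ 1)
    (hG : ∀ N, G N = 1 + ∑ j ∈ range (N + 1), f j * G j) (N : ℕ) :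
    G N = ∏ j ∈ range (N + 1), (1 - f j)⁻¹ := by
  have hsub (j : ℕ) : 1 - f j ≠ 0 := sub_ne_zero.2 (hf j).symm
  induction N with
  | zero =>
    have h0 := hG 0
    rw [zero_add, sum_range_one] at h0
    rw [zero_add, prod_range_one, ← one_div, eq_div_iff (hsub 0)]
    linear_combination h0
  | succ N ih =>
    have hsucc := hG (N + 1)
    rw [sum_range_succ, ← add_assoc, ← hG N] at hsucc
    rw [prod_range_succ, ← ih, eq_mul_inv_iff_mul_eq₀ (hsub (N + 1))]
    linear_combination hsucc

variable {a : ι → ℕ → ℝ} {f : ℕ → ℝ}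

lemma sum_starSum_cons_le (ha : ∀ k j, 0 ≤ a k j) (hsum : ∀ j, HasSum (fun k => a k j) (f j))
    {A : Finset ι} {B : Finset (List ι)} {N : ℕ} {b : ℕ → ℝ}
    (hB : ∀ j, ∑ K ∈ B, starSum a K j ≤ b j) :
    ∑ p ∈ A ×ˢ B, starSum a (p.1 :: p.2) N ≤ ∑ j ∈ range (N + 1), f j * b j := by
  simp only [starSum_cons]
  rw [sum_comm]
  refine sum_le_sum fun j _ => ?_
  rw [sum_product' A B fun k K => a k j * starSum a K j, ← sum_mul_sum]
  exact mul_le_mul (sum_le_hasSum A (fun k _ => ha k j) (hsum j)) (hB j)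
    (sum_nonneg fun K _ => starSum_nonneg ha K j) ((hsum j).nonneg fun k => ha k j)

lemma sum_starSum_le_of_length_lt (ha : ∀ k j, 0 ≤ a k j)
    (hsum : ∀ j, HasSum (fun k => a k j) (f j)) (hf : ∀ j, f j < 1) (n : ℕ)
    {s : Finset (List ι)} (hs : ∀ K ∈ s, K.length < n) (N : ℕ) :
    ∑ K ∈ s, starSum a K N ≤ ∏ j ∈ range (N + 1), (1 - f j)⁻¹ := by
  classical
  induction n generalizing s N with
  | zero =>
    rw [sum_eq_zero fun K hK => absurd (hs K hK) (Nat.not_lt_zero _)]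
    exact prod_nonneg fun j _ => inv_nonneg.2 (sub_nonneg.2 (hf j).le)
  | succ n ih =>
    let A : Finset ι := s.biUnion fun K => K.head?.toFinset
    let B : Finset (List ι) := {K ∈ s.image List.tail | K.length < n}
    have hcover : s ⊆ insert [] ((A ×ˢ B).image fun p => p.1 :: p.2) := by
      rintro (_ | ⟨k, K⟩) hK
      · simp
      · have hlen : K.length < n := by simpa using hs _ hK
        simp only [mem_insert, reduceCtorEq, false_or, mem_image, mem_product, List.cons.injEq]
        refine ⟨(k, K), ⟨mem_biUnion.2 ⟨_, hK, by simp⟩, mem_filter.2 ⟨?_, hlen⟩⟩, rfl, rfl⟩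
        exact mem_image.2 ⟨_, hK, rfl⟩
    calc ∑ K ∈ s, starSum a K N
        ≤ ∑ K ∈ insert [] ((A ×ˢ B).image fun p => p.1 :: p.2), starSum a K N :=
          sum_le_sum_of_subset_of_nonneg hcover fun K _ _ => starSum_nonneg ha K N
      _ = 1 + ∑ p ∈ A ×ˢ B, starSum a (p.1 :: p.2) N := by
          rw [sum_insert (by simp), starSum_nil, sum_image injective_uncurry_cons.injOn]
      _ ≤ 1 + ∑ j ∈ range (N + 1), f j * ∏ i ∈ range (j + 1), (1 - f i)⁻¹ := by
          gcongr
          exact sum_starSum_cons_le ha hsum fun j =>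
            ih (fun K hK => (mem_filter.1 hK).2) j
      _ = ∏ j ∈ range (N + 1), (1 - f j)⁻¹ :=
          one_add_sum_mul_prod_one_sub_inv (fun j => (hf j).ne) N

lemma summable_starSum_of_nonneg (ha : ∀ k j, 0 ≤ a k j)
    (hsum : ∀ j, HasSum (fun k => a k j) (f j)) (hf : ∀ j, f j < 1) (N : ℕ) :
    Summable fun K : List ι => starSum a K N :=
  summable_of_sum_le (fun K => starSum_nonneg ha K N) fun s =>
    sum_starSum_le_of_length_lt ha hsum hf (s.sup List.length + 1)
      (fun _ hK => Nat.lt_succ_of_le (le_sup (f := List.length) hK)) N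

lemma summable_norm_starSum [NormedField 𝕜] {a : ι → ℕ → 𝕜}
    (ha : ∀ j, HasSum (fun k => ‖a k j‖) (f j)) (hf : ∀ j, f j < 1) (N : ℕ) :
    Summable fun K : List ι => ‖starSum a K N‖ :=
  (summable_starSum_of_nonneg (fun _ _ => norm_nonneg _) ha hf N).of_nonneg_of_le
    (fun _ => norm_nonneg _) fun K => norm_starSum_le a K N

/-- The noncommutative form of `∑ₙ hₙ(x₀, …, x_N) = ∏ (1 - x_j)⁻¹` for the complete homogeneous
symmetric polynomials `hₙ`. -/
theorem hasSum_starSum [NormedField 𝕜] [CompleteSpace 𝕜] {a : ι → ℕ → 𝕜} {f : ℕ → 𝕜} {F : ℕ → ℝ}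
    (hnorm : ∀ j, HasSum (fun k => ‖a k j‖) (F j)) (hF : ∀ j, F j < 1)
    (hsum : ∀ j, HasSum (fun k => a k j) (f j)) (N : ℕ) :
    HasSum (fun K : List ι => starSum a K N) (∏ j ∈ range (N + 1), (1 - f j)⁻¹) := by
  have hsummable_norm := summable_norm_starSum hnorm hF
  have hne (j : ℕ) : f j ≠ 1 := by
    intro h
    have := (hsum j).norm_le_of_bounded (hnorm j) fun _ => le_rfl
    rw [h, norm_one] at this
    exact this.not_gt (hF j)
  have hrec (N : ℕ) : ∑' K, starSum a K N =
      1 + ∑ j ∈ range (N + 1), f j * ∑' K, starSum a K j := by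
    rw [← starSum_nil a N]
    refine (hasSum_list_of_hasSum_cons (f := fun K => starSum a K N) ?_).tsum_eq
    simp only [starSum_cons]
    refine hasSum_sum fun j _ => ?_
    exact (hasSum_mul_of_summable_norm (hnorm j).summable (hsum j) (hsummable_norm j)
      (hsummable_norm j).of_norm.hasSum :)
  rw [← eq_prod_one_sub_inv_of_eq_one_add_sum hne hrec]
  exact (hsummable_norm N).of_norm.hasSum

end WordSeries

section StarPolylog

open Finset

/-- The letter weight `m⁻ᵏ` at the odd number `m = 2j + 1`. -/
noncomputable def oddInvPow (𝕜 : Type*) [DivisionRing 𝕜] (k j : ℕ) : 𝕜 :=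
  (((2 * j + 1 : ℕ) : 𝕜) ^ k)⁻¹

lemma norm_oddInvPow (𝕜 : Type*) [RCLike 𝕜] (k j : ℕ) : ‖oddInvPow 𝕜 k j‖ = oddInvPow ℝ k j := by
  rw [oddInvPow, norm_inv, norm_pow, RCLike.norm_natCast, oddInvPow]

lemma oddInvPow_le_one (k j : ℕ) : oddInvPow ℝ k j ≤ 1 :=
  inv_le_one_of_one_le₀ (one_le_pow₀ (mod_cast Nat.le_add_left 1 (2 * j)))

lemma norm_oddInvPow_le_one (𝕜 : Type*) [RCLike 𝕜] (k j : ℕ) : ‖oddInvPow 𝕜 k j‖ ≤ 1 :=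
  (norm_oddInvPow 𝕜 k j).trans_le (oddInvPow_le_one k j)

/-- The summand of `L*_{k :: K}(z)` at the odd tuple `mᵢ = 2 jᵢ + 1`, with the leading variable
separated from the others. -/
noncomputable def starPolylogTerm (k : ℕ) (K : List ℕ) (z : ℝ) (j : Fin (K.length + 1) → ℕ) : ℝ :=
  if Antitone j then
    z ^ (2 * j 0 + 1) * (oddInvPow ℝ k (j 0) * ∏ i, oddInvPow ℝ (K.get i) (j i.succ))
  else 0

lemma norm_starPolylogTerm (k : ℕ) (K : List ℕ) (z : ℝ) (j : Fin (K.length + 1) → ℕ) :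
    ‖starPolylogTerm k K z j‖ = starPolylogTerm k K |z| j := by
  unfold starPolylogTerm
  split_ifs
  · simp only [norm_mul, norm_prod, norm_oddInvPow, norm_pow, Real.norm_eq_abs]
  · exact norm_zero

lemma LtStar_eq_tsum_starPolylogTerm (k : ℕ) (K : List ℕ) (z : ℝ) :
    LtStar (k :: K) z = ∑' j, starPolylogTerm k K z j := by
  have hinj : Function.Injective fun (j : Fin (K.length + 1) → ℕ) i => 2 * j i + 1 :=
    fun j j' h => funext fun i => by simpa using congrFun h i
  rw [LtStar]
  refine (hinj.tsum_eq fun m hm => ?_).symm.trans (tsum_congr fun j => ?_)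
  · have hodd : ∀ i, Odd (m i) := by
      by_contra h
      exact hm (dif_neg fun h' => h h'.1)
    choose j hj using hodd
    exact ⟨j, (funext hj).symm⟩
  · rw [starPolylogTerm, ← dite_eq_ite]
    refine dite_congr (propext ?_) (fun _ => congrArg _ (Fin.prod_univ_succ _)) fun _ => rfl
    rw [antitone_iff_forall_lt]
    simp

lemma hasSum_starPolylogTerm_cons (k : ℕ) (K : List ℕ) (z : ℝ) (N : ℕ) :
    HasSum (fun j : Fin K.length → ℕ => starPolylogTerm k K z (Fin.cons N j))
      (z ^ (2 * N + 1) * (oddInvPow ℝ k N * starSum (oddInvPow ℝ) K N)) := by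
  have hvalue : z ^ (2 * N + 1) * (oddInvPow ℝ k N * starSum (oddInvPow ℝ) K N) =
      ∑ j ∈ antitoneTuples K.length N, starPolylogTerm k K z (Fin.cons N j) := by
    rw [starSum, mul_sum, mul_sum]
    refine sum_congr rfl fun j hj => ?_
    rw [starPolylogTerm, if_pos (antitone_cons_iff.2 (mem_antitoneTuples.1 hj))]
    simp only [Fin.cons_zero, Fin.cons_succ]
  rw [hvalue]
  exact hasSum_sum_of_ne_finset_zero fun j hj =>
    if_neg (mt (antitone_cons_iff.trans mem_antitoneTuples.symm).1 hj)

lemma summable_pow_mul_starSum (k : ℕ) (K : List ℕ) {z : ℝ} (hz : |z| < 1) :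
    Summable fun N : ℕ => z ^ (2 * N + 1) * (oddInvPow ℝ k N * starSum (oddInvPow ℝ) K N) := by
  have hgeom : Summable fun N : ℕ => ((N + 1 : ℕ) : ℝ) ^ K.length * |z| ^ (N + 1) :=
    (summable_nat_add_iff 1).2
      (summable_pow_mul_geometric_of_norm_lt_one K.length (r := |z|) (by rwa [norm_abs_eq_norm]))
  refine hgeom.of_norm_bounded fun N => ?_
  have hstar : ‖oddInvPow ℝ k N * starSum (oddInvPow ℝ) K N‖ ≤ ((N + 1 : ℕ) : ℝ) ^ K.length := by
    rw [norm_mul, ← one_mul (((N + 1 : ℕ) : ℝ) ^ K.length)]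
    exact mul_le_mul (norm_oddInvPow_le_one ℝ k N)
      (norm_starSum_le_pow (norm_oddInvPow_le_one ℝ) K N) (norm_nonneg _) zero_le_one
  have hpow : |z| ^ (2 * N + 1) ≤ |z| ^ (N + 1) :=
    pow_le_pow_of_le_one (abs_nonneg z) hz.le (by lia)
  rw [norm_mul, norm_pow, mul_comm, Real.norm_eq_abs z]
  gcongr

lemma hasSum_LtStar_cons (k : ℕ) (K : List ℕ) {z : ℝ} (hz : |z| < 1) :
    HasSum (fun N : ℕ => z ^ (2 * N + 1) * (oddInvPow ℝ k N * starSum (oddInvPow ℝ) K N))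
      (LtStar (k :: K) z) := by
  have htuples : HasSum (fun p : ℕ × (Fin K.length → ℕ) => starPolylogTerm k K z (Fin.cons p.1 p.2))
      (∑' N : ℕ, z ^ (2 * N + 1) * (oddInvPow ℝ k N * starSum (oddInvPow ℝ) K N)) :=
    hasSum_prod_of_norm_bounded (fun _ => (norm_starPolylogTerm k K z _).le)
      (hasSum_starPolylogTerm_cons k K |z|)
      (summable_pow_mul_starSum k K (by rwa [abs_abs])) (hasSum_starPolylogTerm_cons k K z)
  have hvalue : LtStar (k :: K) z =
      ∑' N : ℕ, z ^ (2 * N + 1) * (oddInvPow ℝ k N * starSum (oddInvPow ℝ) K N) :=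
    calc LtStar (k :: K) z = ∑' j, starPolylogTerm k K z j := LtStar_eq_tsum_starPolylogTerm k K z
      _ = ∑' p : ℕ × (Fin K.length → ℕ), starPolylogTerm k K z (Fin.cons p.1 p.2) :=
        ((Fin.consEquiv fun _ => ℕ).tsum_eq _).symm
      _ = _ := htuples.tsum_eq
  exact hvalue ▸ (summable_pow_mul_starSum k K hz).hasSum

end StarPolylog

section Weights

open Finset Filter Topology

variable {𝕜 : Type*}

/-- The weight `u ^ (k - 2)` of an admissible first entry `k ≥ 2`. The other values of `k` get
weight `0`, so that sums over admissible indices become sums over all lists of natural numbers. -/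
def headWeight [Semiring 𝕜] (u : 𝕜) : ℕ → 𝕜
  | 0 => 0
  | 1 => 0
  | k + 2 => u ^ k

/-- The weight of an entry after the first one: `v` for the entry `1`, and `w * u ^ (k - 2)` for an
entry `k ≥ 2`. The value `0`, which is not an entry of an index, gets weight `0`. -/
def tailWeight [Semiring 𝕜] (u v w : 𝕜) : ℕ → 𝕜
  | 0 => 0
  | 1 => v
  | k + 2 => w * u ^ k

/-- The generating function `∑ₖ tailWeight u v w k * x⁻ᵏ` of the tail weights. -/
def letterSum [Field 𝕜] (u v w x : 𝕜) : 𝕜 :=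
  v * x⁻¹ + w * (x * (x - u))⁻¹

lemma one_sub_letterSum [Field 𝕜] {u x : 𝕜} (v w : 𝕜) (hx : x ≠ 0) (hux : x - u ≠ 0) :
    1 - letterSum u v w x = ((x - u) * (x - v) - w) / (x * (x - u)) := by
  unfold letterSum
  field_simp
  ring

lemma letterSum_lt_one {u v w x : ℝ} (hu : u < 1) (hv : v < 1) (hw : w < (1 - u) * (1 - v))
    (hx : 1 ≤ x) : letterSum u v w x < 1 := by
  have hux : 0 < x - u := by linarith
  have hx0 : 0 < x := by linarith
  have hmul : (1 - u) * (1 - v) ≤ (x - u) * (x - v) :=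
    mul_le_mul (by linarith) (by linarith) (by linarith) hux.le
  rw [← sub_pos, one_sub_letterSum v w hx0.ne' hux.ne']
  exact div_pos (by linarith) (mul_pos hx0 hux)

section NormedField

variable [NormedField 𝕜]

lemma norm_headWeight (u : 𝕜) (k : ℕ) : ‖headWeight u k‖ = headWeight ‖u‖ k := by
  rcases k with _ | _ | k
  exacts [norm_zero, norm_zero, norm_pow u k]

lemma norm_tailWeight (u v w : 𝕜) (k : ℕ) :
    ‖tailWeight u v w k‖ = tailWeight ‖u‖ ‖v‖ ‖w‖ k := by
  rcases k with _ | _ | k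
  exacts [norm_zero, rfl, by simp only [tailWeight, norm_mul, norm_pow]]

lemma hasSum_headWeight {u x : 𝕜} (hux : ‖u‖ < ‖x‖) :
    HasSum (fun k => headWeight u k * (x ^ k)⁻¹) (x * (x - u))⁻¹ := by
  have hx : x ≠ 0 := norm_pos_iff.1 ((norm_nonneg u).trans_lt hux)
  have hxu : x - u ≠ 0 := sub_ne_zero.2 fun h => hux.ne (congrArg norm h).symm
  have hratio : ‖u / x‖ < 1 := by rwa [norm_div, div_lt_one (norm_pos_iff.2 hx)]
  have hgeom := (hasSum_geometric_of_norm_lt_one hratio).mul_right (x ^ 2)⁻¹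
  have hterm (k : ℕ) : headWeight u (k + 2) * (x ^ (k + 2))⁻¹ = (u / x) ^ k * (x ^ 2)⁻¹ := by
    change u ^ k * _ = _
    rw [div_pow, pow_add]
    field_simp
  have hvalue : (1 - u / x)⁻¹ * (x ^ 2)⁻¹ =
      (x * (x - u))⁻¹ - ∑ k ∈ range 2, headWeight u k * (x ^ k)⁻¹ := by
    rw [sum_eq_zero fun k hk => by
      rcases k with _ | _ | k
      exacts [zero_mul _, zero_mul _, absurd (mem_range.1 hk) (by lia)]]
    field_simp
    ring
  rw [← hasSum_nat_add_iff' 2, ← hvalue]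
  exact hgeom.congr_fun hterm

lemma hasSum_tailWeight {u x : 𝕜} (v w : 𝕜) (hux : ‖u‖ < ‖x‖) :
    HasSum (fun k => tailWeight u v w k * (x ^ k)⁻¹) (letterSum u v w x) := by
  rw [letterSum]
  convert (hasSum_ite_eq 1 (v * x⁻¹)).add ((hasSum_headWeight hux).mul_left w) using 2 with k
  rcases k with _ | _ | k <;> simp [tailWeight, headWeight, mul_assoc]

end NormedField

/-- The contribution to the generating function of the tuples of odd numbers with largest entry
`2N + 1`. -/
def levelTerm [Field 𝕜] (u v w z : 𝕜) (N : ℕ) : 𝕜 :=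
  z ^ (2 * N + 1) * (((2 * N + 1 : ℕ) * ((2 * N + 1 : ℕ) - u))⁻¹ *
    ∏ j ∈ range (N + 1), (1 - letterSum u v w (2 * j + 1 : ℕ))⁻¹)

lemma summable_levelTerm (u v w : ℝ) {z : ℝ} (hz : |z| < 1) : Summable (levelTerm u v w z) := by
  have hodd : Tendsto (fun N : ℕ => ((2 * N + 1 : ℕ) : ℝ)) atTop atTop :=
    tendsto_natCast_atTop_atTop.comp
      (tendsto_atTop_mono (fun N => (by lia : N ≤ 2 * N + 1)) tendsto_id)
  have hhead : Tendsto (fun N : ℕ => (((2 * N + 1 : ℕ) : ℝ) * ((2 * N + 1 : ℕ) - u))⁻¹)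
      atTop (𝓝 0) :=
    (hodd.atTop_mul_atTop₀ (tendsto_atTop_add_const_right _ (-u) hodd)).inv_tendsto_atTop
  have hfactor : Tendsto (fun N : ℕ => (1 - letterSum u v w (2 * N + 1 : ℕ))⁻¹) atTop (𝓝 1) := by
    have hletter := (hodd.inv_tendsto_atTop.const_mul v).add (hhead.const_mul w)
    simp only [mul_zero, add_zero, Pi.inv_apply] at hletter
    simpa only [letterSum, sub_zero, inv_one] using (hletter.const_sub 1).inv₀ (by simp)
  have hz2 : ‖z ^ 2‖ < 1 := by simpa using hz
  have hsum := (summable_pow_mul_prod_range_succ hz2 hfactor).norm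
  refine ((hsum.mul_tendsto_const (c := 0) (by rwa [Nat.cofinite_eq_atTop])).mul_left z).congr
    fun N => ?_
  rw [levelTerm, pow_succ z (2 * N), pow_mul]
  ring

section RCLike

variable [RCLike 𝕜]

lemma norm_lt_norm_odd {u : 𝕜} (hu : ‖u‖ < 1) (N : ℕ) : ‖u‖ < ‖((2 * N + 1 : ℕ) : 𝕜)‖ := by
  rw [RCLike.norm_natCast]
  exact hu.trans_le (mod_cast Nat.le_add_left 1 (2 * N))

/-- The letter of the star sums whose total over words is the generating function of the entries
after the first one. -/
noncomputable def tailLetter (u v w : 𝕜) (k j : ℕ) : 𝕜 :=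
  tailWeight u v w k * oddInvPow 𝕜 k j

lemma norm_tailLetter (u v w : 𝕜) (k j : ℕ) :
    ‖tailLetter u v w k j‖ = tailLetter ‖u‖ ‖v‖ ‖w‖ k j := by
  rw [tailLetter, norm_mul, norm_tailWeight, norm_oddInvPow, tailLetter]

lemma hasSum_tailLetter {u : 𝕜} (hu : ‖u‖ < 1) (v w : 𝕜) (j : ℕ) :
    HasSum (fun k => tailLetter u v w k j) (letterSum u v w (2 * j + 1 : ℕ)) :=
  hasSum_tailWeight v w (norm_lt_norm_odd hu j)

/-- The summand of the generating function at the index `k :: K` and largest odd entry `2N + 1`. -/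
noncomputable def weightedTerm (u v w z : 𝕜) (k : ℕ) (K : List ℕ) (N : ℕ) : 𝕜 :=
  z ^ (2 * N + 1) * (headWeight u k * oddInvPow 𝕜 k N * starSum (tailLetter u v w) K N)

lemma norm_weightedTerm_le (u v w z : 𝕜) (k : ℕ) (K : List ℕ) (N : ℕ) :
    ‖weightedTerm u v w z k K N‖ ≤ weightedTerm ‖u‖ ‖v‖ ‖w‖ ‖z‖ k K N := by
  have hstar := norm_starSum_le (tailLetter u v w) K N
  simp only [norm_tailLetter] at hstar
  rw [weightedTerm, norm_mul, norm_mul, norm_mul, norm_pow, norm_headWeight, norm_oddInvPow]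
  refine mul_le_mul_of_nonneg_left (mul_le_mul_of_nonneg_left hstar ?_) (by positivity)
  rw [← norm_headWeight, ← norm_oddInvPow 𝕜]
  positivity

variable {u v w : 𝕜}

lemma hasSum_weightedTerm (hu : ‖u‖ < 1) (hv : ‖v‖ < 1) (hw : ‖w‖ < (1 - ‖u‖) * (1 - ‖v‖)) (z : 𝕜)
    (N : ℕ) : HasSum (fun p : ℕ × List ℕ => weightedTerm u v w z p.1 p.2 N)
      (levelTerm u v w z N) := by
  have hhead : HasSum (fun k => headWeight u k * oddInvPow 𝕜 k N)
      ((2 * N + 1 : ℕ) * ((2 * N + 1 : ℕ) - u))⁻¹ :=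
    hasSum_headWeight (norm_lt_norm_odd hu N)
  have hnorm (j : ℕ) : HasSum (fun k => ‖tailLetter u v w k j‖)
      (letterSum ‖u‖ ‖v‖ ‖w‖ (2 * j + 1 : ℕ)) := by
    simp only [norm_tailLetter]
    exact hasSum_tailLetter (by rwa [norm_norm]) _ _ j
  have hlt (j : ℕ) : letterSum ‖u‖ ‖v‖ ‖w‖ (2 * j + 1 : ℕ) < 1 :=
    letterSum_lt_one hu hv hw (mod_cast Nat.le_add_left 1 (2 * j))
  have hwords := hasSum_starSum hnorm hlt (hasSum_tailLetter hu v w) N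
  exact ((hasSum_mul_of_summable_norm hhead.summable.norm hhead
    (summable_norm_starSum hnorm hlt N) hwords :)).mul_left (z ^ (2 * N + 1))

lemma hasSum_weightedTerm_prod (hu : ‖u‖ < 1) (hv : ‖v‖ < 1) (hw : ‖w‖ < (1 - ‖u‖) * (1 - ‖v‖))
    {z : 𝕜} (hz : ‖z‖ < 1) :
    HasSum (fun p : ℕ × (ℕ × List ℕ) => weightedTerm u v w z p.2.1 p.2.2 p.1)
      (∑' N, levelTerm u v w z N) :=
  hasSum_prod_of_norm_bounded (fun p => norm_weightedTerm_le u v w z p.2.1 p.2.2 p.1)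
    (hasSum_weightedTerm (by rwa [norm_norm]) (by rwa [norm_norm]) (by simpa only [norm_norm]) ‖z‖)
    (summable_levelTerm _ _ _ (by rwa [abs_norm])) (hasSum_weightedTerm hu hv hw z)

end RCLike

/-- The weight of an index in the generating function: `headWeight` of the first entry times the
`tailWeight`s of the others. -/
def indexWeight [Semiring 𝕜] (u v w : 𝕜) : List ℕ → 𝕜
  | [] => 0
  | k :: K => headWeight u k * (K.map (tailWeight u v w)).prod

lemma hasSum_weightedTerm_level (u v w : ℂ) {z : ℝ} (hz : |z| < 1) (k : ℕ) (K : List ℕ) :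
    HasSum (weightedTerm u v w z k K) (indexWeight u v w (k :: K) * (LtStar (k :: K) z : ℂ)) := by
  refine ((Complex.hasSum_ofReal.2 (hasSum_LtStar_cons k K hz)).mul_left _).congr_fun fun N => ?_
  have hstar : starSum (oddInvPow ℂ) K N = ((starSum (oddInvPow ℝ) K N : ℝ) : ℂ) := by
    simp [starSum, oddInvPow]
  have hletter : starSum (tailLetter u v w) K N =
      (K.map (tailWeight u v w)).prod * starSum (oddInvPow ℂ) K N :=
    starSum_mul_left _ _ K N
  rw [weightedTerm, hletter, hstar, indexWeight]
  push_cast [oddInvPow]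
  ring

theorem hasSum_indexWeight_mul_LtStar {u v w : ℂ} (hu : ‖u‖ < 1) (hv : ‖v‖ < 1)
    (hw : ‖w‖ < (1 - ‖u‖) * (1 - ‖v‖)) {z : ℝ} (hz : |z| < 1) :
    HasSum (fun K => indexWeight u v w K * (LtStar K z : ℂ)) (∑' N, levelTerm u v w (z : ℂ) N) := by
  have htriple := (Equiv.prodComm _ _).hasSum_iff.2
    (hasSum_weightedTerm_prod hu hv hw (z := (z : ℂ)) (by simpa using hz))
  have hcons := htriple.prod_fiberwise fun p => hasSum_weightedTerm_level u v w hz p.1 p.2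
  have hlist := hasSum_list_of_hasSum_cons (f := fun K => indexWeight u v w K * (LtStar K z : ℂ))
    hcons
  rwa [indexWeight, zero_mul, zero_add] at hlist

end Weights

section Indices

variable {R : Type*}

/-- The height of an index, the number of its entries that are at least `2`. -/
def indexHeight (K : List ℕ) : ℕ :=
  K.countP fun i => decide (2 ≤ i)

/-- The exponents of `u`, `v`, `w` attached to an index. For an admissible index of weight `k`,
depth `n` and height `s` they are `k - n - s`, `n - s` and `s - 1`; the first two are written so
that they are additive over the entries (by truncation, an entry `1` adds `0` to the first one). -/
def indexExponents (K : List ℕ) : ℕ × ℕ × ℕ :=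
  ((K.map (· - 2)).sum, K.count 1, indexHeight K - 1)

lemma indexHeight_one_cons (K : List ℕ) : indexHeight (1 :: K) = indexHeight K :=
  List.countP_cons_of_neg (by simp)

lemma indexHeight_add_two_cons (l : ℕ) (K : List ℕ) :
    indexHeight ((l + 2) :: K) = indexHeight K + 1 :=
  List.countP_cons_of_pos (by simp)

@[elab_as_elim]
lemma index_induction {P : List ℕ → Prop} (nil : P []) (one_cons : ∀ K, P K → P (1 :: K))
    (add_two_cons : ∀ l K, P K → P ((l + 2) :: K)) {K : List ℕ} (hK : ∀ i ∈ K, 1 ≤ i) : P K := by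
  induction K with
  | nil => exact nil
  | cons k K ih =>
    have hP := ih fun i hi => hK i (.tail k hi)
    obtain _ | _ | l := k
    · exact absurd (hK 0 (.head K)) (by simp)
    · exact one_cons K hP
    · exact add_two_cons l K hP

lemma length_eq_count_one_add_indexHeight {K : List ℕ} (hK : ∀ i ∈ K, 1 ≤ i) :
    K.length = K.count 1 + indexHeight K := by
  refine index_induction rfl (fun K ih => ?_) (fun l K ih => ?_) hK
  · rw [List.length_cons, List.count_cons_self, indexHeight_one_cons]
    lia
  · rw [List.length_cons, List.count_cons_of_ne (by simp), indexHeight_add_two_cons]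
    lia

lemma sum_eq_sum_map_sub_two_add {K : List ℕ} (hK : ∀ i ∈ K, 1 ≤ i) :
    K.sum = (K.map (· - 2)).sum + K.count 1 + 2 * indexHeight K := by
  refine index_induction rfl (fun K ih => ?_) (fun l K ih => ?_) hK
  · rw [List.sum_cons, List.map_cons, List.sum_cons, List.count_cons_self, indexHeight_one_cons]
    lia
  · rw [List.sum_cons, List.map_cons, List.sum_cons, List.count_cons_of_ne (by simp),
      indexHeight_add_two_cons]
    lia

lemma prod_map_tailWeight [CommSemiring R] (u v w : R) {K : List ℕ} (hK : ∀ i ∈ K, 1 ≤ i) :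
    (K.map (tailWeight u v w)).prod =
      u ^ (K.map (· - 2)).sum * v ^ K.count 1 * w ^ indexHeight K := by
  refine index_induction (by simp [indexHeight]) (fun K ih => ?_) (fun l K ih => ?_) hK
  · rw [List.map_cons, List.prod_cons, ih, List.map_cons, List.sum_cons, List.count_cons_self,
      indexHeight_one_cons, tailWeight]
    ring
  · rw [List.map_cons, List.prod_cons, ih, List.map_cons, List.sum_cons,
      List.count_cons_of_ne (by simp), indexHeight_add_two_cons, tailWeight, Nat.add_sub_cancel]
    ring

lemma admissible_cons {k : ℕ} {K : List ℕ} :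
    Admissible (k :: K) ↔ 2 ≤ k ∧ ∀ i ∈ K, 1 ≤ i := by
  simp only [Admissible, List.mem_cons, forall_eq_or_imp, List.headI_cons]
  exact ⟨fun h => ⟨h.2, h.1.2⟩, fun h => ⟨⟨by lia, h.2⟩, h.1⟩⟩

lemma indexWeight_of_admissible [CommSemiring R] (u v w : R) {K : List ℕ} (hK : Admissible K) :
    indexWeight u v w K =
      u ^ (indexExponents K).1 * v ^ (indexExponents K).2.1 * w ^ (indexExponents K).2.2 := by
  rcases K with _ | ⟨k, K⟩
  · simp [Admissible] at hK
  obtain ⟨hk, hpos⟩ := admissible_cons.1 hK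
  obtain ⟨l, rfl⟩ := Nat.exists_eq_add_of_le' hk
  rw [indexWeight, prod_map_tailWeight u v w hpos]
  simp [headWeight, indexExponents, indexHeight, pow_add, mul_assoc]

lemma indexWeight_of_not_admissible [CommSemiring R] (u v w : R) {K : List ℕ}
    (hK : ¬ Admissible K) : indexWeight u v w K = 0 := by
  rcases K with _ | ⟨k, K⟩
  · rfl
  rw [admissible_cons, not_and] at hK
  rcases k with _ | _ | k
  · exact zero_mul _
  · exact zero_mul _
  have hmem : 0 ∈ K := by simpa using hK (Nat.le_add_left 2 k)
  rw [indexWeight, List.prod_eq_zero (List.mem_map.2 ⟨0, hmem, rfl⟩), mul_zero]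

lemma indexExponents_eq_iff {K : List ℕ} (hK : Admissible K) {p : ℕ × ℕ × ℕ} :
    indexExponents K = p ↔ K.sum = p.1 + p.2.1 + 2 * p.2.2 + 2 ∧ K.length = p.2.1 + p.2.2 + 1 ∧
      indexHeight K = p.2.2 + 1 := by
  have hlen := length_eq_count_one_add_indexHeight hK.1
  have hsum := sum_eq_sum_map_sub_two_add hK.1
  have hheight : 0 < indexHeight K := by
    rcases K with _ | ⟨k, K⟩
    · simp [Admissible] at hK
    · simp [indexHeight, (admissible_cons.1 hK).1]
  rw [indexExponents, Prod.ext_iff, Prod.ext_iff]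
  lia

lemma tsum_indexExponents_fiber (u v w : ℂ) (z : ℝ) (p : ℕ × ℕ × ℕ) :
    ∑' K : indexExponents ⁻¹' {p}, indexWeight u v w K * (LtStar K z : ℂ) =
      (G0hzStar (p.1 + p.2.1 + 2 * p.2.2 + 2) (p.2.1 + p.2.2 + 1) (p.2.2 + 1) z : ℂ) *
        u ^ p.1 * v ^ p.2.1 * w ^ p.2.2 := by
  rw [tsum_subtype _ fun K => indexWeight u v w K * (LtStar K z : ℂ), G0hzStar, Complex.ofReal_tsum,
    mul_assoc, mul_assoc, ← tsum_mul_right]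
  refine tsum_congr fun K => ?_
  by_cases hK : Admissible K
  · have hiff := indexExponents_eq_iff hK (p := p)
    by_cases hp : K ∈ indexExponents ⁻¹' {p}
    · rw [Set.indicator_of_mem hp, if_pos ⟨hK, hiff.1 hp⟩, indexWeight_of_admissible u v w hK,
        show indexExponents K = p from hp]
      ring
    · rw [Set.indicator_of_notMem hp, if_neg fun h => hp (hiff.2 h.2), Complex.ofReal_zero,
        zero_mul]
  · rw [if_neg fun h => hK h.1, Complex.ofReal_zero, zero_mul, Set.indicator_apply_eq_zero]
    exact fun _ => by rw [indexWeight_of_not_admissible u v w hK, zero_mul]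

theorem hasSum_G0hzStar {u v w : ℂ} (hu : ‖u‖ < 1) (hv : ‖v‖ < 1)
    (hw : ‖w‖ < (1 - ‖u‖) * (1 - ‖v‖)) {z : ℝ} (hz : |z| < 1) :
    HasSum (fun p : ℕ × ℕ × ℕ =>
      (G0hzStar (p.1 + p.2.1 + 2 * p.2.2 + 2) (p.2.1 + p.2.2 + 1) (p.2.2 + 1) z : ℂ) *
        u ^ p.1 * v ^ p.2.1 * w ^ p.2.2) (∑' N, levelTerm u v w (z : ℂ) N) := by
  simpa only [tsum_indexExponents_fiber] using
    (hasSum_indexWeight_mul_LtStar hu hv hw hz).tsum_fiberwise indexExponents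

end Indices

section Hypergeometric

open Finset

lemma poch_one (N : ℕ) : poch 1 N = N.factorial := by
  rw [poch, ← prod_range_add_one_eq_factorial]
  push_cast
  exact prod_congr rfl fun _ _ => add_comm _ _

lemma pow_mul_poch_mul_poch (c a b : ℂ) (N : ℕ) :
    c ^ N * poch a N * poch b N = ∏ j ∈ range N, c * (a + j) * (b + j) := by
  rw [poch, poch, prod_mul_distrib, prod_mul_distrib, prod_const, card_range]

lemma prod_odd_mul_odd_sub (u : ℂ) (N : ℕ) :
    ∏ j ∈ range N, ((2 * j + 1 : ℕ) : ℂ) * ((2 * j + 1 : ℕ) - u) =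
      4 ^ N * poch ((1 - u) / 2) N * poch (1 / 2) N := by
  rw [pow_mul_poch_mul_poch]
  refine prod_congr rfl fun j _ => ?_
  push_cast
  ring

lemma prod_odd_sub_mul_odd_sub_sub {u v w α β : ℂ} (hsum : α + β = 3 - u / 2 - v / 2)
    (hprod : α * β = (9 - 3 * u - 3 * v + u * v - w) / 4) (N : ℕ) :
    ∏ j ∈ range (N + 1), (((2 * j + 1 : ℕ) - u) * ((2 * j + 1 : ℕ) - v) - w) =
      (1 - u - v + u * v - w) * (4 ^ N * poch α N * poch β N) := by
  rw [pow_mul_poch_mul_poch, prod_range_succ', mul_comm]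
  congr 1
  · push_cast
    ring
  · refine prod_congr rfl fun j _ => ?_
    push_cast
    linear_combination -4 * j * hsum - 4 * hprod

lemma levelTerm_eq_hyp3F2_term {u v w α β : ℂ} (hu : ‖u‖ < 1) (z : ℂ)
    (hsum : α + β = 3 - u / 2 - v / 2)
    (hprod : α * β = (9 - 3 * u - 3 * v + u * v - w) / 4) (N : ℕ) :
    levelTerm u v w z N = z / (1 - u - v + u * v - w) *
      (poch ((1 - u) / 2) N * poch (1 / 2) N * poch 1 N / (N.factorial * poch α N * poch β N) *
        (z ^ 2) ^ N) := by
  have hodd (j : ℕ) : ((2 * j + 1 : ℕ) : ℂ) ≠ 0 := Nat.cast_ne_zero.2 (2 * j).succ_ne_zero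
  have hsub (j : ℕ) : ((2 * j + 1 : ℕ) : ℂ) - u ≠ 0 :=
    sub_ne_zero.2 fun h => (norm_lt_norm_odd hu j).ne (congrArg norm h).symm
  have hfactor : ∏ j ∈ range (N + 1), (1 - letterSum u v w (2 * j + 1 : ℕ))⁻¹ =
      (4 ^ N * poch ((1 - u) / 2) N * poch (1 / 2) N *
          (((2 * N + 1 : ℕ) : ℂ) * ((2 * N + 1 : ℕ) - u))) /
        ((1 - u - v + u * v - w) * (4 ^ N * poch α N * poch β N)) := by
    rw [← prod_odd_mul_odd_sub, ← prod_odd_sub_mul_odd_sub_sub hsum hprod, ← prod_range_succ,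
      ← prod_div_distrib]
    exact prod_congr rfl fun j _ => by rw [one_sub_letterSum v w (hodd j) (hsub j), inv_div]
  have hfact : (N.factorial : ℂ) ≠ 0 := Nat.cast_ne_zero.2 N.factorial_ne_zero
  have hN := hodd N
  have hNu := hsub N
  rw [levelTerm, hfactor, poch_one]
  field_simp
  ring

end Hypergeometric

theorem phi0_star_eq_hyp3F2_general {u v w : ℂ} (hu : ‖u‖ < 1) (hv : ‖v‖ < 1)
    (hw : ‖w‖ < (1 - ‖u‖) * (1 - ‖v‖)) {z : ℝ} (hz : |z| < 1) :
    Summable (fun p : ℕ × ℕ × ℕ =>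
      (G0hzStar (p.1 + p.2.1 + 2 * p.2.2 + 2) (p.2.1 + p.2.2 + 1) (p.2.2 + 1) z : ℂ) *
        u ^ p.1 * v ^ p.2.1 * w ^ p.2.2) ∧
    ∀ α β : ℂ, α + β = 3 - u / 2 - v / 2 →
      α * β = (9 - 3 * u - 3 * v + u * v - w) / 4 →
      ∑' p : ℕ × ℕ × ℕ,
        (G0hzStar (p.1 + p.2.1 + 2 * p.2.2 + 2) (p.2.1 + p.2.2 + 1) (p.2.2 + 1) z : ℂ) *
          u ^ p.1 * v ^ p.2.1 * w ^ p.2.2 =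
        z / (1 - u - v + u * v - w) * hyp3F2 ((1 - u) / 2) (1 / 2) 1 α β (z ^ 2) := by
  have hlevels := hasSum_G0hzStar hu hv hw hz
  refine ⟨hlevels.summable, fun α β hsum hprod => ?_⟩
  rw [hlevels.tsum_eq, hyp3F2, ← tsum_mul_left]
  exact tsum_congr (levelTerm_eq_hyp3F2_term hu z hsum hprod)

/-- Theorem 3.4: for `0 ≤ z < 1`,
`∑ G₀*(k,n,s;z) u^{k-n-s} v^{n-s} w^{s-1}
 = (z/(1-u-v+uv-w)) ⬝ ₃F₂((1-u)/2, 1/2, 1; α*, β*; z²)`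
where `α* + β* = 3 - u/2 - v/2` and `α*β* = (9 - 3u - 3v + uv - w)/4`. -/
theorem phi0_star_eq_hyp3F2 :
    ∃ δ > (0 : ℝ), ∀ u v w : ℝ, |u| < δ → |v| < δ → |w| < δ →
      ∀ z : ℝ, 0 ≤ z → z < 1 →
        Summable (fun p : ℕ × ℕ × ℕ =>
          G0hzStar (p.1 + p.2.1 + 2 * p.2.2 + 2) (p.2.1 + p.2.2 + 1) (p.2.2 + 1) z
            * u ^ p.1 * v ^ p.2.1 * w ^ p.2.2) ∧
        ∀ αs βs : ℂ, αs + βs = 3 - (u : ℂ) / 2 - (v : ℂ) / 2 →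
          αs * βs = (9 - 3 * (u : ℂ) - 3 * (v : ℂ) + (u : ℂ) * (v : ℂ) - (w : ℂ)) / 4 →
          ((∑' p : ℕ × ℕ × ℕ,
              G0hzStar (p.1 + p.2.1 + 2 * p.2.2 + 2) (p.2.1 + p.2.2 + 1) (p.2.2 + 1) z
                * u ^ p.1 * v ^ p.2.1 * w ^ p.2.2 : ℝ) : ℂ)
            = (z : ℂ) / (1 - (u : ℂ) - (v : ℂ) + (u : ℂ) * (v : ℂ) - (w : ℂ)) *
                hyp3F2 ((1 - (u : ℂ)) / 2) (1 / 2) 1 αs βs ((z : ℂ) ^ 2) := by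
  refine ⟨1 / 3, by norm_num, fun u v w hu hv hw z hz0 hz1 => ?_⟩
  have hw' : |w| < (1 - |u|) * (1 - |v|) := by nlinarith
  have hgeneral := phi0_star_eq_hyp3F2_general (u := u) (v := v) (w := w) (z := z)
    (by rw [Complex.norm_real, Real.norm_eq_abs]; linarith)
    (by rw [Complex.norm_real, Real.norm_eq_abs]; linarith)
    (by simpa only [Complex.norm_real, Real.norm_eq_abs] using hw')
    (by rwa [abs_of_nonneg hz0])
  exact_mod_cast hgeneral
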